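/- Let X ⊆ S^ℕ be a one-directional subshift. Then a turn order a ∈ {A,B}^ℕ lies in the winning shift W(X) if and only if every finite prefix a_0⋯a_{n−1} lies in W(B(X)); consequently W(X) is itself a subshift of {A,B}^ℕ and its language satisfies B(W(X)) = W(B(X)). -/

import Mathlib

/-!
Word games (Salo–Törmä, "Playing with Subshifts").
The players' alphabet is `Bool`: player `A` is `false`, player `B` is `true`
(so that the order `A < B` is the order `false < true` on `Bool`).
-/

/-- Auxiliary function for the play of a finite ordered word game: the word built so far
is accumulated in the second argument, and at each step the player indicated by the
turn order picks the next letter as a function of the word built so far. -/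
def playAux {S : Type*} (sA sB : List S → S) : List Bool → List S → List S
  | [], w => w
  | b :: rest, w => playAux sA sB rest (w ++ [(if b then sB else sA) w])

/-- The play of the finite ordered word game with turn order `a`,
where `A` uses strategy `sA` and `B` uses strategy `sB`. -/
def play {S : Type*} (sA sB : List S → S) (a : List Bool) : List S :=
  playAux sA sB a []

/-- The winning set `W(X)` of a target set `X` of finite words: the set of turn orders
for which `A` has a winning strategy. -/
def Wset {S : Type*} (X : Set (List S)) : Set (List Bool) :=
  { a | ∃ sA : List S → S, ∀ sB : List S → S, play sA sB a ∈ X }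

/-- The prefix of length `n` of the play of the infinite ordered word game with
turn order `a : ℕ → Bool`. -/
def playPref {S : Type*} (sA sB : List S → S) (a : ℕ → Bool) : ℕ → List S
  | 0 => []
  | n + 1 => playPref sA sB a n ++ [(if a n then sB else sA) (playPref sA sB a n)]

/-- The play of the infinite ordered word game: coordinate `i` is chosen by the player
`a i` as a function of the word `x_0 ⋯ x_{i-1}` built so far. -/
def playInf {S : Type*} (sA sB : List S → S) (a : ℕ → Bool) : ℕ → S :=
  fun i => (if a i then sB else sA) (playPref sA sB a i)

/-- The winning shift `W(X)` of a target set `X ⊆ S^ℕ`: the set of turn orders for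
which `A` has a winning strategy in the infinite game. -/
def WShift {S : Type*} (X : Set (ℕ → S)) : Set (ℕ → Bool) :=
  { a | ∃ sA : List S → S, ∀ sB : List S → S, playInf sA sB a ∈ X }

/-- The shift map on one-directional configurations. -/
def shiftN {S : Type*} (x : ℕ → S) : ℕ → S := fun i => x (i + 1)

/-- The language `B(X)` of a set of one-directional configurations: all finite words
occurring as factors of its elements. -/
def langN {S : Type*} (X : Set (ℕ → S)) : Set (List S) :=
  { w | ∃ x ∈ X, ∃ i : ℕ, w = List.ofFn fun j : Fin w.length => x (i + j.val) }

/-!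
A closed set is determined by the prefixes of its points, so the prefix characterization of `W(X)`
follows from two facts about an arbitrary target set `X`. First, prefixes of `W(X)` are exactly the
turn orders won against the prefixes of `X`: once the finite game is won, `A` takes all remaining
moves and copies a point of `X` extending the word reached. Second, if `X` is closed, so are the
pairs (turn order, winning strategy for `A`), because the play depends continuously on the turn
order and the strategies; as `S` is finite, the space of strategies is compact, and projecting to
turn orders shows that `W(X)` is closed. For shift-invariant sets, such as `X` and then `W(X)`,
prefixes and factors coincide.
-/

section WordGames

variable {S : Type*}

/-- The prefix `x_0 ⋯ x_{n-1}` of a configuration, in the form in which prefixes of turn orders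
enter the prefix characterization of the winning shift. -/
def prefixWord (x : ℕ → S) (n : ℕ) : List S := List.ofFn fun i : Fin n => x i

/-- The finite prefixes of points of `X`. In contrast to `langN`, only occurrences at position `0`
count; this makes it the right language for target sets that are not shift-invariant. -/
def prefixLang (X : Set (ℕ → S)) : Set (List S) := { w | ∃ x ∈ X, prefixWord x w.length = w }

@[simp]
theorem length_prefixWord (x : ℕ → S) (n : ℕ) : (prefixWord x n).length = n :=
  List.length_ofFn

theorem prefixWord_succ (x : ℕ → S) (n : ℕ) :
    prefixWord x (n + 1) = prefixWord x n ++ [x n] :=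
  List.ofFn_succ_last

theorem prefixWord_succ_eq_cons (x : ℕ → S) (n : ℕ) :
    prefixWord x (n + 1) = x 0 :: prefixWord (shiftN x) n :=
  List.ofFn_succ

theorem prefixWord_eq_prefixWord_iff {x y : ℕ → S} {n : ℕ} :
    prefixWord x n = prefixWord y n ↔ ∀ i < n, x i = y i := by
  simp only [prefixWord, List.ofFn_inj, funext_iff, Fin.forall_iff]

theorem take_prefixWord (x : ℕ → S) {m n : ℕ} (h : m ≤ n) :
    (prefixWord x n).take m = prefixWord x m := by
  apply List.ext_getElem <;> simp [prefixWord, h]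

theorem prefixWord_mem_prefixLang {X : Set (ℕ → S)} {x : ℕ → S} (hx : x ∈ X) (n : ℕ) :
    prefixWord x n ∈ prefixLang X :=
  ⟨x, hx, by rw [length_prefixWord]⟩

theorem mem_iff_forall_prefixWord_mem_prefixLang [TopologicalSpace S] {X : Set (ℕ → S)}
    (hX : IsClosed X) {x : ℕ → S} : x ∈ X ↔ ∀ n, prefixWord x n ∈ prefixLang X := by
  refine ⟨prefixWord_mem_prefixLang, fun h => ?_⟩
  choose y hyX hy using h
  simp only [length_prefixWord, prefixWord_eq_prefixWord_iff] at hy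
  have hlim : Filter.Tendsto y Filter.atTop (nhds x) :=
    tendsto_pi_nhds.2 fun i => tendsto_const_nhds.congr' <|
      (Filter.eventually_gt_atTop i).mono fun n hn => (hy n i hn).symm
  exact hX.mem_of_tendsto hlim (Filter.Eventually.of_forall hyX)

theorem drop_mem_of_forall_shiftN_mem {X : Set (ℕ → S)} (hX : ∀ x ∈ X, shiftN x ∈ X)
    {x : ℕ → S} (hx : x ∈ X) (i : ℕ) : (fun j => x (i + j)) ∈ X := by
  induction i with
  | zero => simpa only [Nat.zero_add] using hx
  | succ i ih =>
    have hdrop : (fun j => x (i + 1 + j)) = shiftN fun j => x (i + j) :=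
      funext fun j => congrArg x (Nat.add_right_comm i 1 j)
    exact hdrop ▸ hX _ ih

theorem langN_eq_prefixLang {X : Set (ℕ → S)} (hX : ∀ x ∈ X, shiftN x ∈ X) :
    langN X = prefixLang X := by
  ext w
  constructor
  · rintro ⟨x, hx, i, hw⟩
    exact ⟨_, drop_mem_of_forall_shiftN_mem hX hx i, hw.symm⟩
  · rintro ⟨x, hx, hw⟩
    exact ⟨x, hx, 0, by simpa only [Nat.zero_add, prefixWord] using hw.symm⟩

theorem playPref_eq_prefixWord (sA sB : List S → S) (a : ℕ → Bool) (n : ℕ) :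
    playPref sA sB a n = prefixWord (playInf sA sB a) n := by
  induction n with
  | zero => rfl
  | succ n ih => rw [prefixWord_succ, ← ih]; rfl

theorem playInf_apply (sA sB : List S → S) (a : ℕ → Bool) (i : ℕ) :
    playInf sA sB a i = (if a i then sB else sA) (prefixWord (playInf sA sB a) i) := by
  rw [← playPref_eq_prefixWord, playInf]

theorem eq_playInf_of_forall_lt {sA sB : List S → S} {a : ℕ → Bool} {x : ℕ → S} {n : ℕ}
    (h : ∀ i < n, x i = (if a i then sB else sA) (prefixWord x i)) :
    ∀ i < n, x i = playInf sA sB a i := by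
  intro i
  induction i using Nat.strong_induction_on with
  | _ i ih =>
    intro hi
    have hpre : prefixWord x i = prefixWord (playInf sA sB a) i :=
      prefixWord_eq_prefixWord_iff.2 fun j hj => ih j hj (hj.trans hi)
    rw [h i hi, hpre, ← playInf_apply]

theorem eq_playInf_of_forall {sA sB : List S → S} {a : ℕ → Bool} {x : ℕ → S}
    (h : ∀ i, x i = (if a i then sB else sA) (prefixWord x i)) : x = playInf sA sB a :=
  funext fun i => eq_playInf_of_forall_lt (fun j _ => h j) i (Nat.lt_succ_self i)

theorem playAux_append (sA sB : List S → S) (v w : List Bool) (u : List S) :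
    playAux sA sB (v ++ w) u = playAux sA sB w (playAux sA sB v u) := by
  induction v generalizing u with
  | nil => rfl
  | cons _ _ ih => exact ih _

theorem play_prefixWord (sA sB : List S → S) (a : ℕ → Bool) (n : ℕ) :
    play sA sB (prefixWord a n) = prefixWord (playInf sA sB a) n := by
  induction n with
  | zero => rfl
  | succ n ih =>
    rw [prefixWord_succ, prefixWord_succ, playInf_apply, play, playAux_append, ← play, ih]
    rfl

theorem shiftN_mem_wShift {X : Set (ℕ → S)} (hX : ∀ x ∈ X, shiftN x ∈ X) :
    ∀ a ∈ WShift X, shiftN a ∈ WShift X := by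
  rintro a ⟨sA, hsA⟩
  -- Whoever moves first in `a`, the first letter is `sA []`: `B` is made to open like `A`.
  let c := sA []
  refine ⟨fun w => sA (c :: w), fun sB => ?_⟩
  let sB' : List S → S
    | [] => c
    | _ :: w => sB w
  let x := playInf sA sB' a
  have hx0 : x 0 = c := (playInf_apply sA sB' a 0).trans (by cases a 0 <;> rfl)
  have hshift : shiftN x = playInf (fun w => sA (c :: w)) sB (shiftN a) := by
    refine eq_playInf_of_forall fun i => ?_
    have hmove : x (i + 1) = (if a (i + 1) then sB' else sA) (c :: prefixWord (shiftN x) i) := by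
      rw [← hx0, ← prefixWord_succ_eq_cons]
      exact playInf_apply sA sB' a (i + 1)
    rw [ite_apply] at hmove ⊢
    exact hmove
  exact hshift ▸ hX x (hsA sB')

/-- The turn order that follows `w` and then leaves every move to player `A`. -/
def extendByA (w : List Bool) : ℕ → Bool := fun i => w.getD i false

theorem prefixWord_extendByA (w : List Bool) : prefixWord (extendByA w) w.length = w := by
  apply List.ext_getElem <;> simp [prefixWord, extendByA]

theorem extendByA_of_length_le {w : List Bool} {i : ℕ} (h : w.length ≤ i) :
    extendByA w i = false :=
  List.getD_eq_default _ _ h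

theorem extendByA_mem_wShift {X : Set (ℕ → S)} {w : List Bool} (hw : w ∈ Wset (prefixLang X)) :
    extendByA w ∈ WShift X := by
  obtain ⟨sA, hsA⟩ := hw
  have : Nonempty S := ⟨sA []⟩
  choose! point hpointX hpoint using fun (u : List S) (hu : u ∈ prefixLang X) => hu
  let sA' : List S → S := fun u =>
    if u.length < w.length then sA u else point (u.take w.length) u.length
  refine ⟨sA', fun sB => ?_⟩
  let x := playInf sA' sB (extendByA w)
  let p := prefixWord x w.length
  have hp : p ∈ prefixLang X := by
    have hplay : p = play sA sB w := by
      conv_rhs => rw [← prefixWord_extendByA w, play_prefixWord]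
      refine prefixWord_eq_prefixWord_iff.2 <| eq_playInf_of_forall_lt fun i hi => ?_
      simpa [sA', ite_apply, hi] using playInf_apply sA' sB (extendByA w) i
    exact hplay ▸ hsA sB
  have hx : point p = x := by
    funext i
    rcases lt_or_ge i w.length with hi | hi
    · have hpp : prefixWord (point p) w.length = p := by simpa [p] using hpoint p hp
      exact prefixWord_eq_prefixWord_iff.1 hpp i hi
    · have hmove : x i = sA' (prefixWord x i) := by
        simpa [extendByA_of_length_le hi] using playInf_apply sA' sB (extendByA w) i
      simpa [sA', hi.not_gt, take_prefixWord x hi] using hmove.symm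
  exact Set.mem_of_eq_of_mem hx.symm (hpointX p hp)

theorem prefixLang_wShift (X : Set (ℕ → S)) : prefixLang (WShift X) = Wset (prefixLang X) := by
  ext w
  constructor
  · rintro ⟨a, ⟨sA, hsA⟩, hw⟩
    refine ⟨sA, fun sB => ?_⟩
    rw [← hw, play_prefixWord]
    exact prefixWord_mem_prefixLang (hsA sB) _
  · exact fun hw => ⟨extendByA w, extendByA_mem_wShift hw, prefixWord_extendByA w⟩

variable [TopologicalSpace S] [DiscreteTopology S]

theorem continuous_playInf :
    Continuous fun p : (List S → S) × (List S → S) × (ℕ → Bool) => playInf p.1 p.2.1 p.2.2 := by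
  refine continuous_pi fun n => continuous_iff_continuousAt.2 fun ⟨sA, sB, a⟩ => ?_
  let x := playInf sA sB a
  have hmove (i : ℕ) : Continuous fun p : (List S → S) × (List S → S) × (ℕ → Bool) =>
      (if p.2.2 i then p.2.1 else p.1) (prefixWord x i) := by
    simp only [ite_apply]
    have hchoice : Continuous fun q : S × S × Bool => if q.2.2 then q.2.1 else q.1 :=
      continuous_of_discreteTopology
    exact hchoice.comp (f := fun p : (List S → S) × (List S → S) × (ℕ → Bool) =>
      (p.1 (prefixWord x i), p.2.1 (prefixWord x i), p.2.2 i)) (by fun_prop)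
  -- Only the finitely many moves up to time `n` along the play `x` matter for `x n`.
  have hnear : ∀ᶠ p in nhds (sA, sB, a), ∀ i < n + 1,
      x i = (if p.2.2 i then p.2.1 else p.1) (prefixWord x i) := by
    refine (Set.finite_lt_nat (n + 1)).eventually_all.2 fun i _ => ?_
    have hopen := (isOpen_discrete {y | x i = y}).preimage (hmove i)
    exact hopen.mem_nhds (playInf_apply sA sB a i)
  exact tendsto_const_nhds.congr' <|
    hnear.mono fun p hp => eq_playInf_of_forall_lt hp n (Nat.lt_succ_self n)

theorem isClosed_wShift [Finite S] {X : Set (ℕ → S)} (hX : IsClosed X) : IsClosed (WShift X) := by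
  let winning : Set ((ℕ → Bool) × (List S → S)) := { p | ∀ sB, playInf p.2 sB p.1 ∈ X }
  have hwinning : IsClosed winning := by
    simp only [winning, Set.ofPred_forall]
    exact isClosed_iInter fun sB => hX.preimage <| continuous_playInf.comp
      (by fun_prop : Continuous fun p : (ℕ → Bool) × (List S → S) => (p.2, sB, p.1))
  have himage : Prod.fst '' winning = WShift X := by
    ext a
    simp [winning, WShift]
  exact himage ▸ isClosedMap_fst_of_compactSpace winning hwinning

end WordGames

/-- For a one-directional subshift `X ⊆ S^ℕ`, a turn order
`a ∈ {A,B}^ℕ` lies in the winning shift `W(X)` iff all of its finite prefixes lie in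
`W(B(X))`; consequently `W(X)` is itself a subshift and `B(W(X)) = W(B(X))`. -/
theorem winningShift_prefix_characterization {S : Type*} [Fintype S] [Nonempty S]
    [TopologicalSpace S] [DiscreteTopology S]
    (X : Set (ℕ → S)) (hXcl : IsClosed X) (hXsh : ∀ x ∈ X, shiftN x ∈ X) :
    (∀ a : ℕ → Bool, a ∈ WShift X ↔
        ∀ n : ℕ, (List.ofFn fun i : Fin n => a i.val) ∈ Wset (langN X)) ∧
      IsClosed (WShift X) ∧ (∀ a ∈ WShift X, shiftN a ∈ WShift X) ∧
      langN (WShift X) = Wset (langN X) := by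
  have hWcl : IsClosed (WShift X) := isClosed_wShift hXcl
  have hWsh : ∀ a ∈ WShift X, shiftN a ∈ WShift X := shiftN_mem_wShift hXsh
  have hlang : langN (WShift X) = Wset (langN X) := by
    rw [langN_eq_prefixLang hWsh, langN_eq_prefixLang hXsh, prefixLang_wShift]
  refine ⟨fun a => ?_, hWcl, hWsh, hlang⟩
  rw [← hlang, langN_eq_prefixLang hWsh]
  exact mem_iff_forall_prefixWord_mem_prefixLang hWcl
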